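/- arXiv:2102.00410 — 3 statements merged into one kernel-verified Lean document; each statement's English description precedes it below -/
import Mathlib

section
/- Let (Λ, μ) be a probability measure space and let ξ₀, ξ₁, ξ₂, ξ₃, ξ₄ : Λ → ℝ be measurable functions satisfying: (i) 0 ≤ ξᵢ(λ) ≤ 1 for all λ and all i; (ii) ξᵢ(λ) + ξ_{i⊕1}(λ) ≤ 1 for all λ and all i; (iii) ∫ ξᵢ ξ_{i⊕1} dμ = 0 for all i; and (iv) the symmetry condition ∫ ξᵢ ξ_{i⊕2} dμ = ∫ ξᵢ ξ_{i⊕3} dμ for all i. Then the non-contextual value of the sequential-measurement correlator satisfies 𝒞 := (2/5) · Σ_{i,j=0}^{4} ∫ ξᵢ ξⱼ dμ ≤ 16/5. -/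
open MeasureTheory

/-- Non-contextual bound for the sequential-measurement correlator in the
KCBS-type single-device scenario: the ontic response functions ξ₀,…,ξ₄
(indices mod 5) satisfy 𝒞 = (2/5)·Σ_{i,j} ∫ ξᵢ ξⱼ dμ ≤ 16/5. -/
theorem noncontextual_bound
    {Λ : Type*} [MeasurableSpace Λ] (μ : Measure Λ) [IsProbabilityMeasure μ]
    (ξ : Fin 5 → Λ → ℝ)
    (hmeas : ∀ i, Measurable (ξ i))
    (hnonneg : ∀ i l, 0 ≤ ξ i l)
    (hle_one : ∀ i l, ξ i l ≤ 1)
    (hcompl : ∀ i l, ξ i l + ξ (i + 1) l ≤ 1)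
    (horth : ∀ i, ∫ l, ξ i l * ξ (i + 1) l ∂μ = 0)
    (hsymm : ∀ i, ∫ l, ξ i l * ξ (i + 2) l ∂μ = ∫ l, ξ i l * ξ (i + 3) l ∂μ) :
    (2 / 5 : ℝ) * ∑ i : Fin 5, ∑ j : Fin 5, ∫ l, ξ i l * ξ j l ∂μ ≤ 16 / 5 := by
  have hint : ∀ i j, Integrable (fun l => ξ i l * ξ j l) μ := fun i j =>
    Integrable.of_bound ((hmeas i).mul (hmeas j)).aestronglyMeasurable 1 <|
      Filter.Eventually.of_forall fun l => by
        rw [Real.norm_of_nonneg (mul_nonneg (hnonneg i l) (hnonneg j l))]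
        exact mul_le_one₀ (hle_one i l) (hnonneg j l) (hle_one j l)
  -- Summing the completeness constraints gives `∑ i, ξ i ≤ 5 / 2`, and `(5 / 2) ^ 2 ≤ 8`.
  have hbound : ∀ l, ∑ i, ∑ j, ξ i l * ξ j l ≤ 8 := fun l => by
    have hshift : ∑ i, ξ (i + 1) l = ∑ i, ξ i l :=
      Equiv.sum_comp (Equiv.addRight (1 : Fin 5)) fun i => ξ i l
    have hsum : ∑ i, (ξ i l + ξ (i + 1) l) ≤ ∑ _i : Fin 5, (1 : ℝ) :=
      Finset.sum_le_sum fun i _ => hcompl i l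
    rw [Finset.sum_add_distrib, hshift] at hsum
    norm_num at hsum
    have hpos : 0 ≤ ∑ i, ξ i l := Finset.sum_nonneg fun i _ => hnonneg i l
    rw [← Finset.sum_mul_sum]
    nlinarith
  have hswap : ∑ i, ∑ j, ∫ l, ξ i l * ξ j l ∂μ = ∫ l, ∑ i, ∑ j, ξ i l * ξ j l ∂μ := by
    rw [integral_finsetSum _ fun i _ => integrable_finsetSum _ fun j _ => hint i j]
    exact Finset.sum_congr rfl fun i _ => (integral_finsetSum _ fun j _ => hint i j).symm
  have hle : ∫ l, ∑ i, ∑ j, ξ i l * ξ j l ∂μ ≤ ∫ _l, (8 : ℝ) ∂μ :=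
    integral_mono
      (integrable_finsetSum _ fun i _ => integrable_finsetSum _ fun j _ => hint i j)
      (integrable_const _) hbound
  rw [integral_const, probReal_univ, one_smul] at hle
  rw [hswap]
  linarith
end

section
/- Let (Λ, μ) be a probability measure space and let ξ₀, ξ₁, ξ₂, ξ₃, ξ₄ : Λ → ℝ be measurable functions satisfying: (i) 0 ≤ ξᵢ(λ) ≤ 1 for all λ and all i; (ii) ξᵢ(λ) + ξ_{i⊕1}(λ) ≤ 1 for all λ and all i; and (iii) the symmetry condition ∫ ξᵢ ξ_{i⊕2} dμ = ∫ ξᵢ ξ_{i⊕3} dμ for all i. Then for every i, the overlap of next-neighbor response functions satisfies ∫ ξᵢ ξ_{i⊕2} dμ ≤ 1/2. -/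
open MeasureTheory

/-- Overlap bound for next-neighbor ontic response functions in the KCBS
5-cycle: under positivity, completeness and the symmetry condition,
∫ ξᵢ ξ_{i⊕2} dμ ≤ 1/2 for every i. -/
theorem overlap_bound
    {Λ : Type*} [MeasurableSpace Λ] (μ : Measure Λ) [IsProbabilityMeasure μ]
    (ξ : Fin 5 → Λ → ℝ)
    (hmeas : ∀ i, Measurable (ξ i))
    (hnonneg : ∀ i l, 0 ≤ ξ i l)
    (hle_one : ∀ i l, ξ i l ≤ 1)
    (hcompl : ∀ i l, ξ i l + ξ (i + 1) l ≤ 1)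
    (hsymm : ∀ i, ∫ l, ξ i l * ξ (i + 2) l ∂μ = ∫ l, ξ i l * ξ (i + 3) l ∂μ) :
    ∀ i, ∫ l, ξ i l * ξ (i + 2) l ∂μ ≤ 1 / 2 := by
  intro i
  have hint : ∀ j k, Integrable (fun l => ξ j l * ξ k l) μ := fun j k => by
    refine Integrable.of_bound ((hmeas j).mul (hmeas k)).aestronglyMeasurable 1
      (Filter.Eventually.of_forall fun l => ?_)
    rw [Real.norm_of_nonneg (mul_nonneg (hnonneg j l) (hnonneg k l))]
    exact mul_le_one₀ (hle_one j l) (hnonneg k l) (hle_one k l)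
  have hpoint : ∀ l, ξ i l * ξ (i + 2) l + ξ i l * ξ (i + 3) l ≤ 1 := fun l => by
    have hadj : ξ (i + 2) l + ξ (i + 3) l ≤ 1 := by
      simpa only [add_assoc, show (2 : Fin 5) + 1 = 3 from rfl] using hcompl (i + 2) l
    rw [← mul_add]
    exact mul_le_one₀ (hle_one i l) (add_nonneg (hnonneg _ l) (hnonneg _ l)) hadj
  have hsum : ∫ l, (ξ i l * ξ (i + 2) l + ξ i l * ξ (i + 3) l) ∂μ ≤ 1 := by
    simpa using integral_mono ((hint i (i + 2)).add (hint i (i + 3)))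
      (integrable_const (1 : ℝ)) hpoint
  rw [integral_add (hint _ _) (hint _ _), ← hsymm i] at hsum
  linarith
end

section
/- Let ξ₀, ξ₁, ξ₂, ξ₃, ξ₄ be real numbers satisfying 0 ≤ ξᵢ ≤ 1 for all i and ξᵢ + ξ_{i⊕1} ≤ 1 for all i (indices modulo 5). Then Σ_{i=0}^{4} ξᵢ ξ_{i⊕2} = ξ₀ξ₂ + ξ₁ξ₃ + ξ₂ξ₄ + ξ₃ξ₀ + ξ₄ξ₁ ≤ ξ₀ + ξ₁ + ξ₂ξ₄. -/
/-- Pointwise estimate used in the derivation of the non-contextual bound: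
for ξᵢ ∈ [0,1] with adjacent sums ξᵢ + ξ_{i⊕1} ≤ 1 (indices mod 5),
Σᵢ ξᵢ ξ_{i⊕2} ≤ ξ₀ + ξ₁ + ξ₂ξ₄. -/
theorem pointwise_estimate
    (ξ : Fin 5 → ℝ)
    (hnonneg : ∀ i, 0 ≤ ξ i)
    (hle_one : ∀ i, ξ i ≤ 1)
    (hcompl : ∀ i, ξ i + ξ (i + 1) ≤ 1) :
    ∑ i : Fin 5, ξ i * ξ (i + 2) ≤ ξ 0 + ξ 1 + ξ 2 * ξ 4 := by
  have h₀ : ξ 0 * (ξ 2 + ξ 3) ≤ ξ 0 := mul_le_of_le_one_right (hnonneg 0) (hcompl 2)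
  have h₁ : ξ 1 * (ξ 3 + ξ 4) ≤ ξ 1 := mul_le_of_le_one_right (hnonneg 1) (hcompl 3)
  have hsum : ∑ i : Fin 5, ξ i * ξ (i + 2) =
      ξ 0 * (ξ 2 + ξ 3) + ξ 1 * (ξ 3 + ξ 4) + ξ 2 * ξ 4 := by
    rw [Fin.sum_univ_five]
    change ξ 0 * ξ 2 + ξ 1 * ξ 3 + ξ 2 * ξ 4 + ξ 3 * ξ 0 + ξ 4 * ξ 1 = _
    ring
  linarith
end
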